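/- The determinant of the character table X of S_n satisfies det X = ∏_{μ ∈ P(n)} a_μ = ∏_{μ ∈ P(n)} b_μ, where for μ = (1^{m₁},2^{m₂},…), a_μ = ∏_i i^{m_i} and b_μ = ∏_i m_i!. -/

import Mathlib

/-!
Multiplying `X` by the unitriangular transition matrix leaves its determinant unchanged and gives
the table of the permutation characters `ξ^λ`. A colouring counted by `ξ^λ(g)` merges the cycles of
`g` into blocks of sizes `λ₁, λ₂, …`. As every block is nonempty, `λ` has at most as many parts as
`g` has cycles, and if the numbers agree then `λ` is the cycle type of `g`. Hence this table is
triangular with respect to the number of parts. Its diagonal entry at `μ` counts the permutations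
of the parts of `μ` that preserve size, which is `b_μ`.

The two products agree because `a_μ` and `b_μ` are the products of `i` and of `j` over the pairs
`(i, j)` with `1 ≤ j ≤ m_i(μ)`, and trading `j` parts equal to `i` for `i` parts equal to `j` is an
involution on the partitions of `n` with such a marked pair, exchanging `i` and `j`.
-/

open scoped Classical

namespace SnTable

variable {n : ℕ}

/-- The parts of a partition, listed in weakly decreasing order. -/
def descList (μ : Nat.Partition n) : List ℕ := (μ.parts.sort (· ≤ ·)).reverse

/-- Strict lexicographic order on partitions of `n` (comparing the lists of parts
written in decreasing order). -/
def plex (μ ν : Nat.Partition n) : Prop := List.Lex (· < ·) (descList μ) (descList ν)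

/-- Weak lexicographic order on partitions of `n`. -/
def plexLE (μ ν : Nat.Partition n) : Prop := μ = ν ∨ plex μ ν

/-- `a_μ = ∏ i^{m_i(μ)}`, the product of the parts of `μ`. -/
def aNum (μ : Nat.Partition n) : ℕ := μ.parts.prod

/-- `b_μ = ∏ m_i(μ)!`, the product of the factorials of the multiplicities. -/
def bNum (μ : Nat.Partition n) : ℕ :=
  ∏ i ∈ μ.parts.toFinset, (μ.parts.count i).factorial

/-- `z_μ = a_μ b_μ`, the centralizer order of an element of cycle type `μ` in `S_n`. -/
def zNum (μ : Nat.Partition n) : ℕ := aNum μ * bNum μ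

/-- The cycle type of a permutation of `Fin n`, as a partition of `n`. -/
def cycleTypePartition (g : Equiv.Perm (Fin n)) : Nat.Partition n :=
  (Fintype.card_fin n) ▸ g.partition

/-- The value at `g` of the permutation character `ξ^λ` of `S_n` obtained by inducing the
trivial character from the Young subgroup `S_λ`: it counts the ordered set partitions of
`Fin n` with block sizes `λ₁ ≥ λ₂ ≥ …` that are fixed by `g`. -/
def permChar (lam : Nat.Partition n) (g : Equiv.Perm (Fin n)) : ℕ :=
  Fintype.card {f : Fin n → Fin (descList lam).length //
    (∀ x, f (g x) = f x) ∧
    ∀ j, (Finset.univ.filter fun x => f x = j).card = (descList lam).get j}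

/-- `X` is the character table of the symmetric group `S_n`, with rows and columns indexed
by the partitions of `n`: each row is an irreducible character (as a class function, via
cycle types), distinct rows are distinct characters, and the labelling is the standard one,
pinned down by the fact that the transition matrix expressing the Young permutation
characters `ξ^λ` in terms of the rows of `X` is unitriangular with respect to the
lexicographic order. -/
def IsCharTable (X : Nat.Partition n → Nat.Partition n → ℤ) : Prop :=
  (∀ lam : Nat.Partition n, ∃ V : FDRep ℂ (Equiv.Perm (Fin n)),
      CategoryTheory.Simple V ∧
      ∀ g : Equiv.Perm (Fin n), V.character g = (X lam (cycleTypePartition g) : ℂ)) ∧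
  (∃ d : Nat.Partition n → Nat.Partition n → ℤ,
      (∀ lam, d lam lam = 1) ∧
      (∀ lam mu, d lam mu ≠ 0 → plexLE lam mu) ∧
      (∀ lam (g : Equiv.Perm (Fin n)),
        (permChar lam g : ℤ) = ∑ mu, d lam mu * X mu (cycleTypePartition g))) ∧
  Function.Injective X

section Triangular

lemma det_eq_prod_diag_of_rank {ι β R : Type*} [Fintype ι] [DecidableEq ι] [LinearOrder β]
    [CommRing R] (M : Matrix ι ι R) (r : ι → β) (hM : ∀ i j, M i j ≠ 0 → i = j ∨ r i < r j) :
    M.det = ∏ i, M i i := by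
  have htri : M.BlockTriangular r := fun i j hji ↦ by
    by_contra hne
    rcases hM i j hne with rfl | hij
    exacts [hji.false, hji.asymm hij]
  have hblock (k : β) :
      M.toSquareBlock r k = Matrix.diagonal fun i : {i // r i = k} ↦ M i i := by
    ext ⟨i, hi⟩ ⟨j, hj⟩
    by_cases hij : i = j
    · subst hij
      simp [Matrix.toSquareBlock_def]
    · have hzero : M i j = 0 := by
        by_contra hne
        exact ((hM i j hne).resolve_left hij).ne (hi.trans hj.symm)
      simpa [Matrix.toSquareBlock_def, Matrix.diagonal_apply, hij] using hzero
  rw [htri.det]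
  simp only [hblock, Matrix.det_diagonal]
  rw [← Finset.prod_fiberwise_of_maps_to fun i _ ↦ Finset.mem_image_of_mem r (Finset.mem_univ i)]
  exact Finset.prod_congr rfl fun k _ ↦ (Finset.prod_subtype _ (by simp) fun i ↦ M i i).symm

end Triangular

section Merging

variable {A B M : Type*} [Fintype A]

lemma exists_equiv_comp_eq_of_map_eq [Fintype B] {s : A → M} {t : B → M}
    (hst : Finset.univ.val.map s = Finset.univ.val.map t) : ∃ e : A ≃ B, t ∘ e = s := by
  have hcard (k : M) : Fintype.card {a // s a = k} = Fintype.card {b // t b = k} := by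
    simpa [Multiset.count_map, Fintype.card_subtype, Finset.card_def, eq_comm]
      using congrArg (Multiset.count k) hst
  exact ⟨Equiv.ofFiberEquiv fun k ↦ Fintype.equivOfCardEq (hcard k),
    funext (Equiv.ofFiberEquiv_map _)⟩

lemma card_stabilizer_eq_prod_factorial_count [Fintype B] [DecidableEq M] (t : B → M) :
    Nat.card {σ : Equiv.Perm B // t ∘ σ = t} =
      ∏ i ∈ (Finset.univ.val.map t).toFinset, ((Finset.univ.val.map t).count i).factorial := by
  rw [Nat.card_eq_fintype_card, DomMulAct.stabilizer_card']
  refine Finset.prod_congr (by ext; simp) fun i _ ↦ congrArg Nat.factorial ?_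
  simp [Multiset.count_map, Fintype.card_subtype, Finset.card_def, eq_comm]

variable [DecidableEq B] [AddCommMonoid M] {s : A → M} {t : B → M} {h : A → B}

/-- `h : A → B` merges the weights `s` on `A` into the weights `t` on `B` if every `b` receives
total weight `t b`. Merging the cycle lengths of `g` into the parts of `λ` is how `ξ^λ(g)` is
computed. -/
def IsMerging (s : A → M) (t : B → M) (h : A → B) : Prop :=
  ∀ b, ∑ a with h a = b, s a = t b

lemma IsMerging.surjective (hh : IsMerging s t h) (ht : ∀ b, t b ≠ 0) :
    Function.Surjective h := by
  intro b
  obtain ⟨a, ha, -⟩ := Finset.exists_ne_zero_of_sum_ne_zero ((hh b).trans_ne (ht b))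
  exact ⟨a, (Finset.mem_filter.1 ha).2⟩

lemma isMerging_iff_comp_eq (hh : Function.Bijective h) : IsMerging s t h ↔ t ∘ h = s := by
  have hsum (a : A) : ∑ x with h x = h a, s x = s a := by
    have hfilter : Finset.univ.filter (h · = h a) = {a} := by
      ext
      simp [hh.injective.eq_iff]
    rw [hfilter, Finset.sum_singleton]
  simp only [IsMerging, hh.surjective.forall, hsum, funext_iff, Function.comp_apply]
  exact forall_congr' fun _ ↦ eq_comm

lemma card_isMerging_eq_card_stabilizer (ht : ∀ b, t b ≠ 0) (e : A ≃ B) (he : t ∘ e = s) :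
    Nat.card {h : A → B // IsMerging s t h} = Nat.card {σ : Equiv.Perm B // t ∘ σ = t} := by
  have := Fintype.ofEquiv A e
  have hbij {h : A → B} (hh : IsMerging s t h) : Function.Bijective h :=
    (Fintype.bijective_iff_surjective_and_card h).2 ⟨hh.surjective ht, Fintype.card_congr e⟩
  refine Nat.card_congr
    { toFun h := ⟨e.symm.trans (.ofBijective h.1 (hbij h.2)), ?_⟩
      invFun σ := ⟨σ.1 ∘ e, ?_⟩
      left_inv h := by ext; simp
      right_inv σ := by ext; simp }
  · have hcomp := (isMerging_iff_comp_eq (hbij h.2)).1 h.2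
    rw [Equiv.coe_trans, Equiv.coe_ofBijective, ← Function.comp_assoc, hcomp, ← he,
      Equiv.comp_symm_eq]
  · rw [isMerging_iff_comp_eq (σ.1.bijective.comp e.bijective), ← Function.comp_assoc, σ.2, he]

end Merging

section Cycles

variable {α : Type*} [Fintype α] [DecidableEq α] (g : Equiv.Perm α)

/-- The orbits of `g`, encoded as the disjoint union of its nontrivial cycles and its fixed
points, since Mathlib's `Equiv.Perm.partition` treats the two separately. -/
abbrev Cycles : Type _ := g.cycleFactorsFinset ⊕ Function.fixedPoints g

/-- The orbit of `g` through `x`. -/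
def cycleThrough (x : α) : Cycles g :=
  if hx : g x = x then .inr ⟨x, hx⟩
  else .inl ⟨g.cycleOf x, Equiv.Perm.cycleOf_mem_cycleFactorsFinset_iff.2
    (Equiv.Perm.mem_support.2 hx)⟩

/-- The number of points of an orbit of `g`. -/
def cycleLength : Cycles g → ℕ := Sum.elim (fun c ↦ c.1.support.card) fun _ ↦ 1

variable {g}

lemma cycleThrough_eq_inl_iff {x : α} {c : g.cycleFactorsFinset} :
    cycleThrough g x = .inl c ↔ x ∈ c.1.support := by
  rw [← Equiv.Perm.eq_cycleOf_of_mem_cycleFactorsFinset_iff g c c.2]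
  by_cases hx : g x = x
  · have hne : c.1 ≠ g.cycleOf x := by
      intro hc
      have hmem := c.2
      rw [hc, Equiv.Perm.cycleOf_mem_cycleFactorsFinset_iff, Equiv.Perm.mem_support] at hmem
      exact hmem hx
    simp [cycleThrough, hx, hne]
  · simp [cycleThrough, hx, Subtype.ext_iff, eq_comm]

lemma cycleThrough_eq_inr_iff {x : α} {y : Function.fixedPoints g} :
    cycleThrough g x = .inr y ↔ x = y := by
  by_cases hx : g x = x
  · simp [cycleThrough, hx, Subtype.ext_iff]
  · have hne : x ≠ y := by
      rintro rfl
      exact hx y.2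
    simp [cycleThrough, hx, hne]

lemma cycleThrough_surjective : Function.Surjective (cycleThrough g) := by
  rintro (c | y)
  · obtain ⟨x, hx⟩ := (Equiv.Perm.mem_cycleFactorsFinset_iff.1 c.2).1.nonempty_support
    exact ⟨x, cycleThrough_eq_inl_iff.2 hx⟩
  · exact ⟨y, cycleThrough_eq_inr_iff.2 rfl⟩

lemma cycleThrough_eq_iff_sameCycle {x y : α} :
    cycleThrough g x = cycleThrough g y ↔ g.SameCycle x y := by
  by_cases hy : g y = y
  · rw [show cycleThrough g y = .inr ⟨y, hy⟩ from dif_pos hy, cycleThrough_eq_inr_iff]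
    exact ⟨fun h ↦ h.sameCycle g, fun h ↦ h.eq_of_right hy⟩
  · rw [show cycleThrough g y = .inl _ from dif_neg hy, cycleThrough_eq_inl_iff,
      Equiv.Perm.mem_support_cycleOf_iff' hy, Equiv.Perm.sameCycle_comm]

lemma card_cycleThrough_eq (c : Cycles g) :
    (Finset.univ.filter fun x ↦ cycleThrough g x = c).card = cycleLength g c := by
  rcases c with c | y
  · refine congrArg Finset.card (Finset.ext fun x ↦ ?_)
    rw [Finset.mem_filter_univ, cycleThrough_eq_inl_iff]
  · refine Finset.card_eq_one.2 ⟨y, Finset.ext fun x ↦ ?_⟩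
    rw [Finset.mem_filter_univ, cycleThrough_eq_inr_iff, Finset.mem_singleton]

variable (g) in
lemma map_cycleLength_eq_parts_partition :
    Finset.univ.val.map (cycleLength g) = g.partition.parts := by
  have hfixed : Fintype.card (Function.fixedPoints g) = Fintype.card α - g.support.card := by
    rw [Equiv.Perm.card_fixedPoints, Equiv.Perm.sum_cycleType]
  rw [Equiv.Perm.parts_partition, Equiv.Perm.cycleType_def, ← hfixed, ← Finset.univ_disjSum_univ]
  simp only [Finset.val_disjSum, Multiset.disjSum, Multiset.map_add, Multiset.map_map]
  congr 1
  · simpa using! Multiset.attach_map_val' g.cycleFactorsFinset.1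
      (Finset.card ∘ Equiv.Perm.support)
  · simp [Function.comp_def, cycleLength]

lemma exists_comp_cycleThrough_eq_iff {B : Type*} {f : α → B} :
    (∃ h : Cycles g → B, h ∘ cycleThrough g = f) ↔ ∀ x, f (g x) = f x := by
  constructor
  · rintro ⟨h, rfl⟩ x
    exact congrArg h (cycleThrough_eq_iff_sameCycle.2
      (Equiv.Perm.sameCycle_apply_left.2 (.refl g x)))
  · intro hf
    have hpow (m : ℕ) (x : α) : f ((g ^ m) x) = f x := by
      induction m with
      | zero => simp
      | succ m ih => rw [pow_succ', Equiv.Perm.mul_apply, hf, ih]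
    have hfactors : f.FactorsThrough (cycleThrough g) := by
      intro x y hxy
      obtain ⟨m, rfl⟩ := (cycleThrough_eq_iff_sameCycle.1 hxy).exists_nat_pow_eq
      exact (hpow m x).symm
    refine ⟨fun c ↦ f (Function.surjInv cycleThrough_surjective c), funext fun x ↦ ?_⟩
    exact hfactors (Function.surjInv_eq cycleThrough_surjective _)

lemma card_comp_cycleThrough_eq {B : Type*} [DecidableEq B] (h : Cycles g → B) (b : B) :
    (Finset.univ.filter fun x ↦ h (cycleThrough g x) = b).card =
      ∑ c with h c = b, cycleLength g c := by
  simp only [← card_cycleThrough_eq, Finset.sum_card_fiberwise_eq_card_filter, Finset.mem_filter,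
    Finset.mem_univ, true_and]

variable (g) in
lemma card_invariant_eq_card_isMerging {B : Type*} [DecidableEq B] (t : B → ℕ) :
    Nat.card {f : α → B // (∀ x, f (g x) = f x) ∧
      ∀ b, (Finset.univ.filter fun x ↦ f x = b).card = t b} =
    Nat.card {h : Cycles g → B // IsMerging (cycleLength g) t h} := by
  symm
  refine Nat.card_congr (Equiv.ofBijective (fun h ↦ ⟨h.1 ∘ cycleThrough g,
    exists_comp_cycleThrough_eq_iff.1 ⟨h.1, rfl⟩,
    fun b ↦ (card_comp_cycleThrough_eq h.1 b).trans (h.2 b)⟩) ⟨?_, ?_⟩)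
  · intro h h' hhh'
    exact Subtype.ext (cycleThrough_surjective.injective_comp_right (congrArg Subtype.val hhh'))
  · rintro ⟨f, hinv, hcard⟩
    obtain ⟨h, rfl⟩ := exists_comp_cycleThrough_eq_iff.2 hinv
    exact ⟨⟨h, fun b ↦ (card_comp_cycleThrough_eq h b).symm.trans (hcard b)⟩, rfl⟩

end Cycles

section CycleType

lemma filter_two_le_parts_add_replicate_one (μ : Nat.Partition n) :
    μ.parts.filter (2 ≤ ·) + .replicate (n - (μ.parts.filter (2 ≤ ·)).sum) 1 = μ.parts := by
  have hone : μ.parts.filter (¬ 2 ≤ ·) =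
      .replicate (μ.parts.filter (¬ 2 ≤ ·)).card 1 := by
    refine Multiset.eq_replicate_card.2 fun k hk ↦ ?_
    have hpos := μ.parts_pos (Multiset.mem_of_mem_filter hk)
    have hlt := Multiset.of_mem_filter hk
    omega
  have hsplit := Multiset.filter_add_not (2 ≤ ·) μ.parts
  have hsum : (μ.parts.filter (2 ≤ ·)).sum + (μ.parts.filter (¬ 2 ≤ ·)).card = n := by
    have := congrArg Multiset.sum hsplit
    rw [hone, Multiset.sum_add, μ.parts_sum] at this
    simpa using this
  rw [Nat.sub_eq_of_eq_add' hsum.symm, ← hone, hsplit]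

lemma exists_perm_parts_partition_eq {α : Type*} [Fintype α] [DecidableEq α]
    (hα : Fintype.card α = n) (μ : Nat.Partition n) :
    ∃ g : Equiv.Perm α, g.partition.parts = μ.parts := by
  have hsum : (μ.parts.filter (2 ≤ ·)).sum ≤ Fintype.card α := by
    have hsplit := Multiset.sum_filter_add_sum_filter_not (2 ≤ ·) (s := μ.parts)
    rw [μ.parts_sum] at hsplit
    exact (Nat.le.intro hsplit).trans_eq hα.symm
  obtain ⟨g, hg⟩ := (Equiv.Perm.exists_with_cycleType_iff α).2
    ⟨hsum, fun _ ↦ Multiset.of_mem_filter⟩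
  refine ⟨g, ?_⟩
  rw [Equiv.Perm.parts_partition, ← Equiv.Perm.sum_cycleType, hg, hα,
    filter_two_le_parts_add_replicate_one]

lemma parts_cycleTypePartition (g : Equiv.Perm (Fin n)) :
    (cycleTypePartition g).parts = g.partition.parts := by
  have hcast {m : ℕ} (h : m = n) (μ : Nat.Partition m) : (h ▸ μ).parts = μ.parts := by
    subst h
    rfl
  exact hcast _ _

lemma cycleTypePartition_surjective :
    Function.Surjective (cycleTypePartition : Equiv.Perm (Fin n) → Nat.Partition n) := by
  intro μ
  obtain ⟨g, hg⟩ := exists_perm_parts_partition_eq (Fintype.card_fin n) μ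
  exact ⟨g, Nat.Partition.ext ((parts_cycleTypePartition g).trans hg)⟩

lemma map_cycleLength_eq_parts (g : Equiv.Perm (Fin n)) :
    Finset.univ.val.map (cycleLength g) = (cycleTypePartition g).parts := by
  rw [map_cycleLength_eq_parts_partition, parts_cycleTypePartition]

end CycleType

section PermutationCharacter

lemma map_descList_get (μ : Nat.Partition n) :
    Finset.univ.val.map (descList μ).get = μ.parts := by
  rw [Fin.univ_val_map, List.ofFn_get, descList, Multiset.coe_reverse, Multiset.sort_eq]

lemma descList_get_ne_zero (μ : Nat.Partition n) (j : Fin (descList μ).length) :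
    (descList μ).get j ≠ 0 := by
  refine (μ.parts_pos ?_).ne'
  rw [← map_descList_get μ]
  exact Multiset.mem_map_of_mem _ (Finset.mem_univ j)

lemma permChar_eq_card_isMerging (lam : Nat.Partition n) (g : Equiv.Perm (Fin n)) :
    permChar lam g = Nat.card {h : Cycles g → Fin (descList lam).length //
      IsMerging (cycleLength g) (descList lam).get h} := by
  rw [permChar, ← Nat.card_eq_fintype_card]
  exact card_invariant_eq_card_isMerging g _

lemma permChar_cycleTypePartition_self (g : Equiv.Perm (Fin n)) :
    permChar (cycleTypePartition g) g = bNum (cycleTypePartition g) := by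
  obtain ⟨e, he⟩ := exists_equiv_comp_eq_of_map_eq
    ((map_cycleLength_eq_parts g).trans (map_descList_get _).symm)
  rw [permChar_eq_card_isMerging,
    card_isMerging_eq_card_stabilizer (descList_get_ne_zero _) e he,
    card_stabilizer_eq_prod_factorial_count, map_descList_get, bNum]

lemma eq_or_card_parts_lt_of_permChar_ne_zero {lam : Nat.Partition n} {g : Equiv.Perm (Fin n)}
    (hne : permChar lam g ≠ 0) :
    lam = cycleTypePartition g ∨ lam.parts.card < (cycleTypePartition g).parts.card := by
  rw [permChar_eq_card_isMerging] at hne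
  obtain ⟨⟨h, hh⟩⟩ := (Nat.card_ne_zero.1 hne).1
  have hsurj := hh.surjective (descList_get_ne_zero lam)
  rw [← map_cycleLength_eq_parts, ← map_descList_get lam, Multiset.card_map, Multiset.card_map]
  refine (Fintype.card_le_of_surjective h hsurj).eq_or_lt.imp_left fun hcard ↦ ?_
  have hbij := (Fintype.bijective_iff_surjective_and_card h).2 ⟨hsurj, hcard.symm⟩
  apply Nat.Partition.ext
  rw [← map_cycleLength_eq_parts, ← (isMerging_iff_comp_eq hbij).1 hh, ← map_descList_get lam,
    ← Multiset.map_map, ← Multiset.map_univ_val_equiv (Equiv.ofBijective h hbij)]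
  rfl

lemma det_permChar {R : Type*} [CommRing R] {g : Nat.Partition n → Equiv.Perm (Fin n)}
    (hg : Function.RightInverse g cycleTypePartition) :
    (Matrix.of fun lam mu ↦ (permChar lam (g mu) : R)).det =
      ∏ μ : Nat.Partition n, (bNum μ : R) := by
  rw [det_eq_prod_diag_of_rank _ fun μ ↦ μ.parts.card]
  · refine Finset.prod_congr rfl fun μ _ ↦ congrArg Nat.cast ?_
    simpa only [hg μ] using permChar_cycleTypePartition_self (g μ)
  · intro lam mu hne
    have hne' : permChar lam (g mu) ≠ 0 := ne_zero_of_map (f := Nat.castRingHom R) hne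
    simpa only [hg mu] using eq_or_card_parts_lt_of_permChar_ne_zero hne'

end PermutationCharacter

section Rectangles

/-- The pairs `(i, j)` such that `μ` has at least `j ≥ 1` parts equal to `i`, pictured as a
rectangle of `j` rows of length `i` in the Young diagram of `μ`. Then `a_μ` and `b_μ` are the
products of the widths and of the heights of these rectangles. -/
def rectangles (μ : Nat.Partition n) : Finset (ℕ × ℕ) :=
  (μ.parts.toFinset.sigma fun i ↦ Finset.Icc 1 (μ.parts.count i)).map
    (Equiv.sigmaEquivProd ℕ ℕ).toEmbedding

lemma mem_rectangles {μ : Nat.Partition n} {p : ℕ × ℕ} :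
    p ∈ rectangles μ ↔ 0 < p.1 ∧ 0 < p.2 ∧ Multiset.replicate p.2 p.1 ≤ μ.parts := by
  have hmem : p ∈ rectangles μ ↔ p.1 ∈ μ.parts ∧ 0 < p.2 ∧ p.2 ≤ μ.parts.count p.1 := by
    simp [rectangles, Nat.one_le_iff_ne_zero, pos_iff_ne_zero]
  rw [hmem, ← Multiset.le_count_iff_replicate_le]
  refine and_congr_left fun ⟨hpos, hle⟩ ↦ ?_
  have hp : p.1 ∈ μ.parts := Multiset.count_pos.1 (hpos.trans_le hle)
  exact iff_of_true hp (μ.parts_pos hp)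

lemma aNum_eq_prod_rectangles (μ : Nat.Partition n) : aNum μ = ∏ p ∈ rectangles μ, p.1 := by
  simp [aNum, rectangles, Finset.prod_sigma, Finset.prod_multiset_count]

lemma bNum_eq_prod_rectangles (μ : Nat.Partition n) : bNum μ = ∏ p ∈ rectangles μ, p.2 := by
  have hfactorial (m : ℕ) : ∏ j ∈ Finset.Icc 1 m, j = m.factorial :=
    Finset.prod_Ico_id_eq_factorial m
  simp [bNum, rectangles, Finset.prod_sigma, hfactorial]

/-- Replace `j` parts equal to `i` by `i` parts equal to `j`, for a pair `(i, j)` of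
`rectangles μ`. -/
def transposeRectangle (μ : Nat.Partition n) {p : ℕ × ℕ} (hp : p ∈ rectangles μ) :
    Nat.Partition n where
  parts := μ.parts - .replicate p.2 p.1 + .replicate p.1 p.2
  parts_pos {k} hk := by
    rcases Multiset.mem_add.1 hk with hk | hk
    · exact μ.parts_pos (Multiset.mem_of_le (Multiset.sub_le_self _ _) hk)
    · rw [Multiset.eq_of_mem_replicate hk]
      exact (mem_rectangles.1 hp).2.1
  parts_sum := by
    have hsum := congrArg Multiset.sum (Multiset.sub_add_cancel (mem_rectangles.1 hp).2.2)
    rw [Multiset.sum_add, μ.parts_sum, Multiset.sum_replicate, smul_eq_mul] at hsum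
    rw [Multiset.sum_add, Multiset.sum_replicate, smul_eq_mul, mul_comm, hsum]

lemma swap_mem_rectangles_transposeRectangle (μ : Nat.Partition n) {p : ℕ × ℕ}
    (hp : p ∈ rectangles μ) : p.swap ∈ rectangles (transposeRectangle μ hp) :=
  have ⟨hi, hj, _⟩ := mem_rectangles.1 hp
  mem_rectangles.2 ⟨hj, hi, Multiset.le_add_left _ _⟩

lemma transposeRectangle_transposeRectangle (μ : Nat.Partition n) {p : ℕ × ℕ}
    (hp : p ∈ rectangles μ) :
    transposeRectangle (transposeRectangle μ hp) (swap_mem_rectangles_transposeRectangle μ hp) =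
      μ := by
  apply Nat.Partition.ext
  simp only [transposeRectangle, Prod.fst_swap, Prod.snd_swap]
  rw [Multiset.add_sub_cancel_right, Multiset.sub_add_cancel (mem_rectangles.1 hp).2.2]

lemma prod_rectangles_swap {M : Type*} [CommMonoid M] (F : ℕ × ℕ → M) :
    ∏ μ : Nat.Partition n, ∏ p ∈ rectangles μ, F p =
      ∏ μ : Nat.Partition n, ∏ p ∈ rectangles μ, F p.swap := by
  rw [Finset.prod_sigma', Finset.prod_sigma']
  have hmem {x : (_ : Nat.Partition n) × ℕ × ℕ}
      (hx : x ∈ Finset.univ.sigma rectangles) : x.2 ∈ rectangles x.1 := (Finset.mem_sigma.1 hx).2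
  refine Finset.prod_bij' (fun x hx ↦ ⟨transposeRectangle x.1 (hmem hx), x.2.swap⟩)
    (fun x hx ↦ ⟨transposeRectangle x.1 (hmem hx), x.2.swap⟩) ?_ ?_ ?_ ?_ ?_
  · exact fun x hx ↦ Finset.mem_sigma.2
      ⟨Finset.mem_univ _, swap_mem_rectangles_transposeRectangle x.1 (hmem hx)⟩
  · exact fun x hx ↦ Finset.mem_sigma.2
      ⟨Finset.mem_univ _, swap_mem_rectangles_transposeRectangle x.1 (hmem hx)⟩
  · exact fun x hx ↦ Sigma.ext (transposeRectangle_transposeRectangle x.1 (hmem hx)) .rfl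
  · exact fun x hx ↦ Sigma.ext (transposeRectangle_transposeRectangle x.1 (hmem hx)) .rfl
  · exact fun _ _ ↦ rfl

lemma prod_aNum_eq_prod_bNum :
    ∏ μ : Nat.Partition n, aNum μ = ∏ μ : Nat.Partition n, bNum μ := by
  simp only [aNum_eq_prod_rectangles, bNum_eq_prod_rectangles]
  exact prod_rectangles_swap Prod.fst

end Rectangles

theorem det_char_table_general {R : Type*} [CommRing R]
    (X d : Nat.Partition n → Nat.Partition n → R)
    (hd_diag : ∀ lam, d lam lam = 1) (hd_le : ∀ lam mu, d lam mu ≠ 0 → plexLE lam mu)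
    (hd_mul : ∀ lam (g : Equiv.Perm (Fin n)),
      (permChar lam g : R) = ∑ mu, d lam mu * X mu (cycleTypePartition g)) :
    (Matrix.of X).det = ∏ μ : Nat.Partition n, (aNum μ : R) ∧
    (Matrix.of X).det = ∏ μ : Nat.Partition n, (bNum μ : R) := by
  obtain ⟨g, hg⟩ := cycleTypePartition_surjective (n := n).hasRightInverse
  have hd : (Matrix.of d).det = 1 := by
    rw [det_eq_prod_diag_of_rank (Matrix.of d) descList hd_le]
    exact Finset.prod_eq_one fun lam _ ↦ hd_diag lam
  have hmul : Matrix.of d * Matrix.of X = .of fun lam mu ↦ (permChar lam (g mu) : R) := by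
    ext lam mu
    simp only [Matrix.mul_apply, Matrix.of_apply, hd_mul, hg mu]
  have hb : (Matrix.of X).det = ∏ μ : Nat.Partition n, (bNum μ : R) := by
    rw [← det_permChar hg, ← hmul, Matrix.det_mul, hd, one_mul]
  refine ⟨?_, hb⟩
  rw [hb, ← Nat.cast_prod, ← prod_aNum_eq_prod_bNum, Nat.cast_prod]

/-- The determinant of the character table `X = (χ^λ_μ)_{λ,μ ∈ P(n)}` of the symmetric group
`S_n` satisfies `det X = ∏_{μ ∈ P(n)} a_μ = ∏_{μ ∈ P(n)} b_μ`. -/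
theorem det_char_table (n : ℕ) (X : Nat.Partition n → Nat.Partition n → ℤ)
    (hX : IsCharTable X) :
    (Matrix.of X).det = ∏ μ : Nat.Partition n, (aNum μ : ℤ) ∧
    (Matrix.of X).det = ∏ μ : Nat.Partition n, (bNum μ : ℤ) := by
  obtain ⟨-, ⟨d, hd_diag, hd_le, hd_mul⟩, -⟩ := hX
  exact det_char_table_general X d hd_diag hd_le hd_mul

end SnTable
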